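/- Let $F$ be a field and $X=\{x_1,\dots,x_n\}$. An algebraic branching program (ABP) is a layered directed acyclic graph with finite layers $L_0=\{s\},L_1,\dots,L_m=\{t\}$, $m\ge 1$, with edges only from one layer to the next, each edge labeled by an element of $X\cup F$; it computes the sum, over all directed $s$-to-$t$ paths, of the product of the edge labels along the path, and its size is its number of nodes. A subprogram of $P$ with the same terminals is an ABP obtained from $P$ by deleting nodes other than $s,t$ and deleting edges. For nodes $u,v$ with $u$ in an earlier layer than $v$, $[u,v]$ denotes the part of $P$ formed by all $u$-to-$v$ paths. A strict-interval ABP is an ABP such that on every $s$-to-$t$ path each variable appears at most once as an edge label, together with intervals $I_{u,v}\subseteq\{1,\dots,n\}$, one for each pair of nodes $u,v$ with $u$ in an earlier layer than $v$, such that $I_{u,v}$ contains the indices of all variables appearing in $[u,v]$, and $I_{u,v}\cap I_{v,w}=\emptyset$ for all consecutive $[u,v]$, $[v,w]$. Here an interval is a set $\{a,a+1,\dots,b\}$ or the empty set (so $I_{u,v}$ can be empty only if no variable appears in $[u,v]$). For intervals write $I\preceq J$ if $x\le y$ for all $x\in I$, $y\in J$ (that is, $b\le c$ if $I=[a,b]$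 and $J=[c,d]$ are nonempty). A node $v\ne s,t$ is ascending if $I_{s,v}\preceq I_{v,t}$, and descending if $I_{v,t}\preceq I_{s,v}$. Theorem. For every strict-interval ABP $P$ there exist strict-interval ABPs $P_1$ and $P_2$, each of which is, as an ABP, a subprogram of $P$ with the same terminals (and hence of size at most the size of $P$), such that all non-terminal nodes of $P_1$ are ascending, all non-terminal nodes of $P_2$ are descending (each with respect to its own intervals), and the polynomial computed by $P$ is the sum of the polynomials computed by $P_1$ and $P_2$. If, moreover, all intervals of $P$ are nonempty and $I_{u',v'}\subseteq I_{u,v}$ whenever $u,u',v',v$ lie in this order on a directed path of $P$ (where $u=u'$ or $v=v'$ is allowed, and $u'\neq v'$), then $P_1$ and $P_2$ can be chosen so that in addition their associated intervals are those of $P$. -/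

import Mathlib

/-- A (layered) algebraic branching program over `F` in the variables `x_0, …, x_{n-1}`.
Layer `k` (for `0 ≤ k ≤ m`) is the finite set `node k`; nodes are named by natural numbers, and
the same name in two layers denotes two different nodes.  The first and the last layer consist
of the start node `s` and the terminal node `t`.  For `k < m`, `u ∈ node k`, `v ∈ node (k + 1)`,
`label k u v = some e` means that there is an edge from `u` to `v` labeled by the constant or
variable `e`, and `label k u v = none` means that there is no edge from `u` to `v`.
Values of `node` and `label` outside these ranges are irrelevant. -/
structure ABP (F : Type*) (n : ℕ) where
  m : ℕ
  m_pos : 0 < m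
  s : ℕ
  t : ℕ
  node : ℕ → Finset ℕ
  node_zero : node 0 = {s}
  node_last : node m = {t}
  label : ℕ → ℕ → ℕ → Option (F ⊕ Fin n)

namespace ABP

variable {F : Type*} {n : ℕ}

/-- The polynomial of an edge label (a missing edge contributes `0`). -/
noncomputable def edgeVal [Field F] : Option (F ⊕ Fin n) → MvPolynomial (Fin n) F
  | none => 0
  | some (Sum.inl c) => MvPolynomial.C c
  | some (Sum.inr i) => MvPolynomial.X i

/-- The polynomial computed by the program: the sum over all `s`-to-`t` paths of the product of
the edge labels along the path.  (The sum runs over all choices of one node per layer; a choice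
that is not a path has a missing edge and contributes `0`.) -/
noncomputable def eval [Field F] (P : ABP F n) : MvPolynomial (Fin n) F :=
  ∑ π ∈ Fintype.piFinset (fun i : Fin (P.m + 1) => P.node i),
    ∏ k : Fin P.m, edgeVal (P.label k (π k.castSucc) (π k.succ))

/-- The size of a program is its number of nodes. -/
def size (P : ABP F n) : ℕ := ∑ i ∈ Finset.range (P.m + 1), (P.node i).card

/-- `π` describes a directed path from a node of layer `i` to a node of layer `j`: for
`i ≤ k ≤ j`, the path visits the node `π k` of layer `k`. -/
def IsPath (P : ABP F n) (i j : ℕ) (π : ℕ → ℕ) : Prop :=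
  (∀ k, i ≤ k → k ≤ j → π k ∈ P.node k) ∧
    ∀ k, i ≤ k → k < j → P.label k (π k) (π (k + 1)) ≠ none

/-- Syntactic multilinearity: on every `s`-to-`t` path, each variable appears at most once
as an edge label. -/
def SynMultilinear (P : ABP F n) : Prop :=
  ∀ π : ℕ → ℕ, P.IsPath 0 P.m π → ∀ (x : Fin n) (k l : ℕ), k < P.m → l < P.m →
    P.label k (π k) (π (k + 1)) = some (Sum.inr x) →
    P.label l (π l) (π (l + 1)) = some (Sum.inr x) → k = l

/-- The variable `x` appears in the subprogram `[u,v]`, where `u` is a node of layer `i` and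
`v` is a node of layer `j`: some `u`-to-`v` path contains an edge labeled `x`. -/
def VarInSub (P : ABP F n) (i j u v : ℕ) (x : Fin n) : Prop :=
  ∃ π : ℕ → ℕ, P.IsPath i j π ∧ π i = u ∧ π j = v ∧
    ∃ k, i ≤ k ∧ k < j ∧ P.label k (π k) (π (k + 1)) = some (Sum.inr x)

/-- `Q` is a subprogram of `P`: it has the same start node and the same terminal node, and
arises from `P` by deleting nodes and edges. -/
def IsSubprogram (Q P : ABP F n) : Prop :=
  Q.m = P.m ∧ Q.s = P.s ∧ Q.t = P.t ∧
    (∀ k, k ≤ P.m → Q.node k ⊆ P.node k) ∧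
    ∀ k u v, k < P.m → u ∈ Q.node k → v ∈ Q.node (k + 1) →
      Q.label k u v = none ∨ Q.label k u v = P.label k u v

end ABP

/-- A strict-interval program: a syntactically multilinear program together with, for all nodes
`u` of layer `i` and `v` of layer `j`, `i < j ≤ m`, an interval `interval i j u v` of indices
that contains the indices of all variables appearing in `[u,v]`, such that the intervals of
consecutive subprograms `[u,v]` and `[v,w]` are disjoint.  The order-connected subsets of
`Fin n` are the intervals `[a,b]` with `a ≤ b` and the empty set; the interval of `[u,v]` can
be empty only if no variable appears in `[u,v]`. -/
structure StrictIntervalABP (F : Type*) (n : ℕ) extends ABP F n where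
  synMultilinear : toABP.SynMultilinear
  interval : ℕ → ℕ → ℕ → ℕ → Set (Fin n)
  interval_ordConnected : ∀ i j u v, i < j → j ≤ m → u ∈ node i → v ∈ node j →
    (interval i j u v).OrdConnected
  mem_interval : ∀ i j u v (x : Fin n), i < j → j ≤ m → u ∈ node i → v ∈ node j →
    toABP.VarInSub i j u v x → x ∈ interval i j u v
  interval_disjoint : ∀ i j k u v w, i < j → j < k → k ≤ m →
    u ∈ node i → v ∈ node j → w ∈ node k →
    Disjoint (interval i j u v) (interval j k v w)

/-- `I ⪯ J`: no element of `I` exceeds an element of `J`.  For `I = [a,b]` with `a ≤ b` and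
`J = [c,d]` with `c ≤ d` this says `b ≤ c`. -/
def IntervalLE {n : ℕ} (I J : Set (Fin n)) : Prop := ∀ x ∈ I, ∀ y ∈ J, x ≤ y

namespace StrictIntervalABP

variable {F : Type*} {n : ℕ}

/-- The node `v` of layer `i` is ascending: `I_{s,v} ⪯ I_{v,t}`. -/
def Ascending (P : StrictIntervalABP F n) (i v : ℕ) : Prop :=
  IntervalLE (P.interval 0 i P.s v) (P.interval i P.m v P.t)

/-- The node `v` of layer `i` is descending: `I_{v,t} ⪯ I_{s,v}`. -/
def Descending (P : StrictIntervalABP F n) (i v : ℕ) : Prop :=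
  IntervalLE (P.interval i P.m v P.t) (P.interval 0 i P.s v)

/-- All associated intervals are nonempty. -/
def IntervalsNonempty (P : StrictIntervalABP F n) : Prop :=
  ∀ i j u v, i < j → j ≤ P.m → u ∈ P.node i → v ∈ P.node j → (P.interval i j u v).Nonempty

/-- `I_{u',v'} ⊆ I_{u,v}` whenever `u, u', v', v` lie in this order on a path, so that
`[u',v']` is a subprogram of `[u,v]`. -/
def IntervalsMonotone (P : StrictIntervalABP F n) : Prop :=
  ∀ (i i' j' j : ℕ) (π : ℕ → ℕ), i ≤ i' → i' < j' → j' ≤ j → j ≤ P.m → P.IsPath i j π →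
    P.interval i' j' (π i') (π j') ⊆ P.interval i j (π i) (π j)

end StrictIntervalABP

/-!
One may assume that `I_{u',v'} ⊆ I_{u,v}` whenever `[u',v']` lies in `[u,v]`: if this fails,
replace every interval by the convex hull of the variables it has to contain. Along an `s`-to-`t`
path, `I_{s,v}` then grows and `I_{v,t}` shrinks, and the two are disjoint intervals, hence
comparable. If a node `u` of the path is descending and a node `v` of it is ascending, then the
smaller of `I_{s,u}`, `I_{s,v}` and the smaller of `I_{u,t}`, `I_{v,t}` each precede the other, so
one of them is empty. Consequently all nodes of a path are ascending or all are descending.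

A path may be both. This happens exactly when `I_{s,v}` or `I_{v,t}` is empty at each of its nodes,
that is, when at some edge `u → v` of the path both `I_{s,u}` and `I_{v,t}` are empty. Deleting
these edges from the program of the descending nodes makes every path of the original program a
path of exactly one of the two parts.
-/

section OrdHull

variable {α : Type*}

/-- The order-convex hull of `s`, i.e. the smallest order-connected set that contains `s`. -/
def ordHull [Preorder α] (s : Set α) : Set α := ↑(upperClosure s) ∩ ↑(lowerClosure s)

variable {s t : Set α}

theorem subset_ordHull [Preorder α] : s ⊆ ordHull s :=
  Set.subset_inter subset_upperClosure subset_lowerClosure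

theorem ordConnected_ordHull [Preorder α] : (ordHull s).OrdConnected :=
  (upperClosure s).upper.ordConnected.inter (lowerClosure s).lower.ordConnected

theorem ordHull_mono [Preorder α] (h : s ⊆ t) : ordHull s ⊆ ordHull t :=
  Set.inter_subset_inter (upperClosure_anti h) (lowerClosure_mono h)

theorem ordHull_subset [PartialOrder α] (h : s ⊆ t) (ht : t.OrdConnected) : ordHull s ⊆ t :=
  (ordHull_mono h).trans ht.upperClosure_inter_lowerClosure.subset

end OrdHull

theorem exists_eq_empty_and_succ_eq_empty_iff {α : Type*} {A B : ℕ → Set α} {m : ℕ} (hm : 0 < m)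
    (hA : MonotoneOn A (Set.Iic m)) (hB : AntitoneOn B (Set.Iic m))
    (hA₀ : A 0 = ∅) (hBm : B m = ∅) :
    (∃ k < m, A k = ∅ ∧ B (k + 1) = ∅) ↔ ∀ i ≤ m, A i = ∅ ∨ B i = ∅ := by
  constructor
  · rintro ⟨k, hk, hAk, hBk⟩ i hi
    rcases le_or_gt i k with hik | hki
    · exact .inl (Set.subset_eq_empty (hA hi hk.le hik) hAk)
    · exact .inr (Set.subset_eq_empty (hB (Nat.succ_le_of_lt hk) hi hki) hBk)
  · intro h
    classical
    have hex : ∃ k, k < m ∧ B (k + 1) = ∅ :=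
      ⟨m - 1, Nat.sub_one_lt_of_lt hm, by rwa [Nat.sub_add_cancel hm]⟩
    obtain ⟨hlt, hempty⟩ := Nat.find_spec hex
    refine ⟨Nat.find hex, hlt, ?_, hempty⟩
    rcases hk : Nat.find hex with _ | l
    · exact hA₀
    · exact (h _ (hk ▸ hlt.le)).resolve_right fun hl =>
        Nat.find_min hex (hk ▸ l.lt_succ_self) ⟨by lia, hl⟩

section IntervalLE

variable {n : ℕ} {I J : Set (Fin n)}

theorem intervalLE_total_of_disjoint (hI : I.OrdConnected) (hJ : J.OrdConnected)
    (hIJ : Disjoint I J) : IntervalLE I J ∨ IntervalLE J I := by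
  by_contra! h
  simp only [IntervalLE, not_forall, not_le] at h
  obtain ⟨⟨x, hx, y, hy, hyx⟩, y', hy', x', hx', hxy'⟩ := h
  rcases le_total x y' with hle | hle
  · exact hIJ.notMem_of_mem_left hx (hJ.out hy hy' ⟨hyx.le, hle⟩)
  · exact hIJ.notMem_of_mem_left (hI.out hx' hx ⟨hxy'.le, hle⟩) hy'

theorem intervalLE_and_intervalLE_iff_of_disjoint (hIJ : Disjoint I J) :
    IntervalLE I J ∧ IntervalLE J I ↔ I = ∅ ∨ J = ∅ := by
  constructor
  · rintro ⟨hle, hge⟩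
    by_contra! hne
    obtain ⟨⟨x, hx⟩, y, hy⟩ := hne
    obtain rfl := le_antisymm (hle x hx y hy) (hge y hy x hx)
    exact hIJ.notMem_of_mem_left hx hy
  · rintro (rfl | rfl) <;> simp [IntervalLE]

theorem IntervalLE.mono {I' J' : Set (Fin n)} (h : IntervalLE I J) (hI : I' ⊆ I) (hJ : J' ⊆ J) :
    IntervalLE I' J' :=
  fun x hx y hy => h x (hI hx) y (hJ hy)

theorem forall_intervalLE_or_forall_intervalLE {ι : Type*} [LinearOrder ι] {S : Set ι}
    {A B : ι → Set (Fin n)} (hA : MonotoneOn A S) (hB : AntitoneOn B S)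
    (hdisj : ∀ i ∈ S, Disjoint (A i) (B i))
    (htotal : ∀ i ∈ S, IntervalLE (A i) (B i) ∨ IntervalLE (B i) (A i)) :
    (∀ i ∈ S, IntervalLE (A i) (B i)) ∨ ∀ i ∈ S, IntervalLE (B i) (A i) := by
  by_contra! h
  obtain ⟨⟨i, hi, hi_not_le⟩, j, hj, hj_not_ge⟩ := h
  have hi_ge := (htotal i hi).resolve_left hi_not_le
  have hj_le := (htotal j hj).resolve_right hj_not_ge
  have hmin : min i j ∈ S := by rcases min_choice i j with h | h <;> rwa [h]
  have hmax : max i j ∈ S := by rcases max_choice i j with h | h <;> rwa [h]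
  have hle : IntervalLE (A (min i j)) (B (max i j)) :=
    hj_le.mono (hA hmin hj (min_le_right i j)) (hB hj hmax (le_max_right i j))
  have hge : IntervalLE (B (max i j)) (A (min i j)) :=
    hi_ge.mono (hB hi hmax (le_max_left i j)) (hA hmin hi (min_le_left i j))
  have hAB : Disjoint (A (min i j)) (B (max i j)) :=
    (hdisj _ hmin).mono_right (hB hmin hmax min_le_max)
  have hempty := (intervalLE_and_intervalLE_iff_of_disjoint hAB).1 ⟨hle, hge⟩
  have hi_neither := mt (intervalLE_and_intervalLE_iff_of_disjoint (hdisj i hi)).2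
    fun h => hi_not_le h.1
  have hj_neither := mt (intervalLE_and_intervalLE_iff_of_disjoint (hdisj j hj)).2
    fun h => hj_not_ge h.2
  rcases le_total i j with hij | hji
  · rw [min_eq_left hij, max_eq_right hij] at hempty
    tauto
  · rw [min_eq_right hji, max_eq_left hji] at hempty
    tauto

end IntervalLE

namespace ABP

variable {F : Type*} {n : ℕ} {P Q : ABP F n} {i j i' j' : ℕ} {π σ : ℕ → ℕ}

theorem s_mem_node_zero (P : ABP F n) : P.s ∈ P.node 0 := by
  simp [P.node_zero]

theorem t_mem_node_last (P : ABP F n) : P.t ∈ P.node P.m := by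
  simp [P.node_last]

theorem IsPath.apply_zero (h : P.IsPath 0 j π) : π 0 = P.s := by
  simpa [P.node_zero] using h.1 0 le_rfl j.zero_le

theorem IsPath.apply_last (h : P.IsPath i P.m π) (hi : i ≤ P.m) : π P.m = P.t := by
  simpa [P.node_last] using h.1 P.m hi le_rfl

theorem IsPath.mono (h : P.IsPath i j π) (hi : i ≤ i') (hj : j' ≤ j) : P.IsPath i' j' π :=
  ⟨fun k hik hkj => h.1 k (hi.trans hik) (hkj.trans hj),
    fun k hik hkj => h.2 k (hi.trans hik) (hkj.trans_le hj)⟩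

theorem IsPath.exists_splice (hπ : P.IsPath i j π) (hσ : P.IsPath i' j' σ)
    (hi : σ i' = π i') (hj : σ j' = π j') :
    ∃ τ, P.IsPath i j τ ∧ (∀ k ∈ Set.Icc i' j', τ k = σ k) ∧ ∀ k ∉ Set.Ioo i' j', τ k = π k := by
  classical
  let τ : ℕ → ℕ := (Set.Icc i' j').piecewise σ π
  have hτσ : ∀ k ∈ Set.Icc i' j', τ k = σ k := fun k hk => Set.piecewise_eq_of_mem _ _ _ hk
  have hτπ : ∀ k ∉ Set.Ioo i' j', τ k = π k := by
    intro k hk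
    by_cases hk' : k ∈ Set.Icc i' j'
    · rw [hτσ k hk']
      obtain rfl | rfl : k = i' ∨ k = j' := by grind
      exacts [hi, hj]
    · exact Set.piecewise_eq_of_notMem _ _ _ hk'
  refine ⟨τ, ⟨fun k hik hkj => ?_, fun k hik hkj => ?_⟩, hτσ, hτπ⟩
  · by_cases hk : k ∈ Set.Icc i' j'
    · exact hτσ k hk ▸ hσ.1 k hk.1 hk.2
    · exact hτπ k (mt (Set.Ioo_subset_Icc_self ·) hk) ▸ hπ.1 k hik hkj
  · by_cases hk : k ∈ Set.Ico i' j'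
    · rw [hτσ k ⟨hk.1, hk.2.le⟩, hτσ (k + 1) ⟨hk.1.trans k.le_succ, hk.2⟩]
      exact hσ.2 k hk.1 hk.2
    · rw [hτπ k (by grind), hτπ (k + 1) (by grind)]
      exact hπ.2 k hik hkj

theorem VarInSub.mono {x : Fin n} (hi : i ≤ i') (hj : j' ≤ j) (hπ : P.IsPath i j π)
    (h : P.VarInSub i' j' (π i') (π j') x) : P.VarInSub i j (π i) (π j) x := by
  obtain ⟨σ, hσ, hσi, hσj, k, hik, hkj, hx⟩ := h
  obtain ⟨τ, hτ, hτσ, hτπ⟩ := hπ.exists_splice hσ hσi hσj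
  refine ⟨τ, hτ, hτπ i (by grind), hτπ j (by grind), k, hi.trans hik, hkj.trans_le hj, ?_⟩
  rwa [hτσ k ⟨hik, hkj.le⟩, hτσ (k + 1) ⟨hik.trans k.le_succ, hkj⟩]

theorem IsSubprogram.refl (P : ABP F n) : P.IsSubprogram P :=
  ⟨rfl, rfl, rfl, fun _ _ => subset_rfl, fun _ _ _ _ _ _ => .inr rfl⟩

theorem IsSubprogram.size_le (h : Q.IsSubprogram P) : Q.size ≤ P.size := by
  unfold size
  rw [h.1]
  exact Finset.sum_le_sum fun k hk =>
    Finset.card_le_card (h.2.2.2.1 k (Finset.mem_range_succ_iff.1 hk))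

theorem IsSubprogram.label_eq (h : Q.IsSubprogram P) (hj : j ≤ P.m) (hπ : Q.IsPath i j π) {k : ℕ}
    (hik : i ≤ k) (hkj : k < j) : Q.label k (π k) (π (k + 1)) = P.label k (π k) (π (k + 1)) :=
  (h.2.2.2.2 k _ _ (hkj.trans_le hj) (hπ.1 k hik hkj.le)
    (hπ.1 (k + 1) (hik.trans k.le_succ) hkj)).resolve_left (hπ.2 k hik hkj)

theorem IsSubprogram.isPath (h : Q.IsSubprogram P) (hj : j ≤ P.m) (hπ : Q.IsPath i j π) :
    P.IsPath i j π :=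
  ⟨fun k hik hkj => h.2.2.2.1 k (hkj.trans hj) (hπ.1 k hik hkj),
    fun k hik hkj => h.label_eq hj hπ hik hkj ▸ hπ.2 k hik hkj⟩

theorem IsSubprogram.varInSub (h : Q.IsSubprogram P) (hj : j ≤ P.m) {u v : ℕ} {x : Fin n}
    (hx : Q.VarInSub i j u v x) : P.VarInSub i j u v x := by
  obtain ⟨π, hπ, hu, hv, k, hik, hkj, hk⟩ := hx
  exact ⟨π, h.isPath hj hπ, hu, hv, k, hik, hkj, h.label_eq hj hπ hik hkj ▸ hk⟩

theorem IsSubprogram.synMultilinear (h : Q.IsSubprogram P) (hP : P.SynMultilinear) :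
    Q.SynMultilinear := by
  intro π hπ x k l hk hl hkx hlx
  rw [h.1] at hπ hk hl
  exact hP π (h.isPath le_rfl hπ) x k l hk hl
    (h.label_eq le_rfl hπ k.zero_le hk ▸ hkx) (h.label_eq le_rfl hπ l.zero_le hl ▸ hlx)

/-- The sequence of nodes `π 0, …, π m` as a function on `ℕ`, the form in which `IsPath` takes a
path. Its values beyond `m` are junk. -/
def natPath {m : ℕ} (π : Fin (m + 1) → ℕ) (k : ℕ) : ℕ :=
  π (Fin.ofNat (m + 1) k)

theorem natPath_val {m : ℕ} (π : Fin (m + 1) → ℕ) (k : Fin (m + 1)) : natPath π k = π k := by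
  rw [natPath, Fin.ofNat_eq_cast, Fin.cast_val_eq_self]

theorem isPath_natPath_iff {m : ℕ} {π : Fin (m + 1) → ℕ} :
    Q.IsPath 0 m (natPath π) ↔ (∀ i : Fin (m + 1), π i ∈ Q.node i) ∧
      ∀ k : Fin m, Q.label k (π k.castSucc) (π k.succ) ≠ none := by
  simp only [← natPath_val π, Fin.val_castSucc, Fin.val_succ, Fin.forall_iff, IsPath,
    Nat.zero_le, true_imp_iff, Nat.lt_succ_iff]

section Eval

variable [Field F]

theorem eval_eq_sum_of_m_eq {m : ℕ} (h : P.m = m) :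
    P.eval = ∑ π ∈ Fintype.piFinset (fun i : Fin (m + 1) => P.node i),
      ∏ k : Fin m, edgeVal (P.label k (π k.castSucc) (π k.succ)) := by
  subst h
  rfl

open Classical in
theorem IsSubprogram.eval_eq_sum_isPath (h : Q.IsSubprogram P) :
    Q.eval = ∑ π ∈ Fintype.piFinset (fun i : Fin (P.m + 1) => P.node i)
      with Q.IsPath 0 P.m (natPath π),
        ∏ k : Fin P.m, edgeVal (P.label k (π k.castSucc) (π k.succ)) := by
  rw [eval_eq_sum_of_m_eq h.1]
  symm
  refine Finset.sum_subset_zero_on_sdiff (fun π hπ => ?_) (fun π hπ => ?_) (fun π hπ => ?_)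
  · exact Fintype.mem_piFinset.2 (isPath_natPath_iff.1 (Finset.mem_filter.1 hπ).2).1
  · obtain ⟨hQ, hnot⟩ := Finset.mem_sdiff.1 hπ
    rw [Fintype.mem_piFinset] at hQ
    have hP : π ∈ Fintype.piFinset (fun i : Fin (P.m + 1) => P.node i) :=
      Fintype.mem_piFinset.2 fun i => h.2.2.2.1 i (Nat.lt_succ_iff.1 i.isLt) (hQ i)
    obtain ⟨k, hk⟩ : ∃ k : Fin P.m, Q.label k (π k.castSucc) (π k.succ) = none := by
      by_contra! hlabel
      exact hnot (Finset.mem_filter.2 ⟨hP, isPath_natPath_iff.2 ⟨hQ, hlabel⟩⟩)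
    exact Finset.prod_eq_zero (Finset.mem_univ k) (by rw [hk, edgeVal])
  · have hpath := (Finset.mem_filter.1 hπ).2
    refine Finset.prod_congr rfl fun k _ => ?_
    have hlabel := h.label_eq le_rfl hpath (Nat.zero_le k) k.isLt
    have hsrc : natPath π k = π k.castSucc := natPath_val π k.castSucc
    have htgt : natPath π (k + 1) = π k.succ := natPath_val π k.succ
    rw [← hsrc, ← htgt, hlabel]

theorem eval_eq_add_of_isPath_xor {Q₁ Q₂ : ABP F n} (h₁ : Q₁.IsSubprogram P)
    (h₂ : Q₂.IsSubprogram P)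
    (hxor : ∀ π, P.IsPath 0 P.m π → Xor (Q₁.IsPath 0 P.m π) (Q₂.IsPath 0 P.m π)) :
    P.eval = Q₁.eval + Q₂.eval := by
  classical
  rw [(IsSubprogram.refl P).eval_eq_sum_isPath, h₁.eval_eq_sum_isPath, h₂.eval_eq_sum_isPath,
    ← Finset.sum_union]
  · congr 1
    rw [← Finset.filter_or]
    exact Finset.filter_congr fun π _ =>
      ⟨fun h => (hxor _ h).or, Or.rec (h₁.isPath le_rfl) (h₂.isPath le_rfl)⟩
  · refine Finset.disjoint_filter.2 fun π _ hQ₁ hQ₂ => ?_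
    exact ((xor_iff_or_and_not_and _ _).1 (hxor _ (h₁.isPath le_rfl hQ₁))).2 ⟨hQ₁, hQ₂⟩

end Eval

/-- The subprogram of `P` formed by the nodes and edges that satisfy the given predicates. The
predicate on nodes has to hold for the terminals, which are never deleted. -/
noncomputable def restrict (P : ABP F n) (keepNode : ℕ → ℕ → Prop) (keepEdge : ℕ → ℕ → ℕ → Prop)
    (hs : keepNode 0 P.s) (ht : keepNode P.m P.t) : ABP F n :=
  open Classical in
  { P with
    node := fun k => (P.node k).filter (keepNode k)
    node_zero := by rw [P.node_zero, Finset.filter_singleton, if_pos hs]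
    node_last := by rw [P.node_last, Finset.filter_singleton, if_pos ht]
    label := fun k u v => if keepEdge k u v then P.label k u v else none }

section Restrict

variable {keepNode : ℕ → ℕ → Prop} {keepEdge : ℕ → ℕ → ℕ → Prop} {hs : keepNode 0 P.s}
  {ht : keepNode P.m P.t}

theorem mem_node_restrict {k v : ℕ} :
    v ∈ (P.restrict keepNode keepEdge hs ht).node k ↔ v ∈ P.node k ∧ keepNode k v := by
  simp [restrict]

theorem label_restrict_ne_none_iff {k u v : ℕ} :
    (P.restrict keepNode keepEdge hs ht).label k u v ≠ none ↔
      P.label k u v ≠ none ∧ keepEdge k u v := by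
  simp [restrict, and_comm]

theorem isSubprogram_restrict : (P.restrict keepNode keepEdge hs ht).IsSubprogram P := by
  refine ⟨rfl, rfl, rfl, fun k _ v hv => (mem_node_restrict.1 hv).1, fun k u v _ _ _ => ?_⟩
  simp only [restrict]
  split_ifs <;> simp

theorem isPath_restrict_iff :
    (P.restrict keepNode keepEdge hs ht).IsPath i j π ↔ P.IsPath i j π ∧
      (∀ k, i ≤ k → k ≤ j → keepNode k (π k)) ∧
      ∀ k, i ≤ k → k < j → keepEdge k (π k) (π (k + 1)) := by
  simp only [IsPath, mem_node_restrict, label_restrict_ne_none_iff, forall_and]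
  tauto

end Restrict

end ABP

namespace StrictIntervalABP

variable {F : Type*} {n : ℕ}

/-- A subprogram of a strict-interval program, with the intervals of the latter. -/
def ofSubprogram (P : StrictIntervalABP F n) (Q : ABP F n) (h : Q.IsSubprogram P.toABP) :
    StrictIntervalABP F n where
  toABP := Q
  synMultilinear := h.synMultilinear P.synMultilinear
  interval := P.interval
  interval_ordConnected i j u v hij hj hu hv := by
    rw [h.1] at hj
    exact P.interval_ordConnected i j u v hij hj
      (h.2.2.2.1 i (hij.le.trans hj) hu) (h.2.2.2.1 j hj hv)
  mem_interval i j u v x hij hj hu hv hx := by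
    rw [h.1] at hj
    exact P.mem_interval i j u v x hij hj
      (h.2.2.2.1 i (hij.le.trans hj) hu) (h.2.2.2.1 j hj hv) (h.varInSub hj hx)
  interval_disjoint i j k u v w hij hjk hk hu hv hw := by
    rw [h.1] at hk
    exact P.interval_disjoint i j k u v w hij hjk hk (h.2.2.2.1 i (by lia) hu)
      (h.2.2.2.1 j (by lia) hv) (h.2.2.2.1 k hk hw)

theorem isSubprogram_ofSubprogram (P : StrictIntervalABP F n) {Q : ABP F n}
    (h : Q.IsSubprogram P.toABP) : (P.ofSubprogram Q h).IsSubprogram P.toABP :=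
  h

theorem ordHull_varInSub_subset_interval (P : StrictIntervalABP F n) {i j u v : ℕ} (hij : i < j)
    (hj : j ≤ P.m) (hu : u ∈ P.node i) (hv : v ∈ P.node j) :
    ordHull {x | P.VarInSub i j u v x} ⊆ P.interval i j u v :=
  ordHull_subset (fun x hx => P.mem_interval i j u v x hij hj hu hv hx)
    (P.interval_ordConnected i j u v hij hj hu hv)

/-- The same program with the smallest possible intervals. -/
def tighten (P : StrictIntervalABP F n) : StrictIntervalABP F n where
  toABP := P.toABP
  synMultilinear := P.synMultilinear
  interval i j u v := ordHull {x | P.VarInSub i j u v x}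
  interval_ordConnected _ _ _ _ _ _ _ _ := ordConnected_ordHull
  mem_interval _ _ _ _ _ _ _ _ _ hx := subset_ordHull hx
  interval_disjoint i j k u v w hij hjk hk hu hv hw :=
    (P.interval_disjoint i j k u v w hij hjk hk hu hv hw).mono
      (P.ordHull_varInSub_subset_interval hij (hjk.le.trans hk) hu hv)
      (P.ordHull_varInSub_subset_interval hjk hk hv hw)

theorem intervalsMonotone_tighten (P : StrictIntervalABP F n) : P.tighten.IntervalsMonotone :=
  fun _ _ _ _ _ hi _ hj _ hπ => ordHull_mono fun _ hx => hx.mono hi hj hπ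

theorem exists_intervalsMonotone (P : StrictIntervalABP F n) :
    ∃ R : StrictIntervalABP F n, R.toABP = P.toABP ∧ R.IntervalsMonotone ∧
      (P.IntervalsMonotone → R.interval = P.interval) := by
  by_cases hmono : P.IntervalsMonotone
  · exact ⟨P, rfl, hmono, fun _ => rfl⟩
  · exact ⟨P.tighten, rfl, P.intervalsMonotone_tighten, fun h => (hmono h).elim⟩

/-- The interval `I_{s,v}` of a node `v` of layer `i`, taken to be empty for `v = s`. With this
convention and that of `suffixInterval`, the terminals are both ascending and descending. -/
def prefixInterval (P : StrictIntervalABP F n) (i v : ℕ) : Set (Fin n) :=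
  if i = 0 then ∅ else P.interval 0 i P.s v

/-- The interval `I_{v,t}` of a node `v` of layer `i`, taken to be empty for `v = t`. -/
def suffixInterval (P : StrictIntervalABP F n) (i v : ℕ) : Set (Fin n) :=
  if i = P.m then ∅ else P.interval i P.m v P.t

section PrefixSuffix

variable {P : StrictIntervalABP F n} {i v : ℕ} {π : ℕ → ℕ}

theorem prefixInterval_zero : P.prefixInterval 0 v = ∅ :=
  if_pos rfl

theorem suffixInterval_last : P.suffixInterval P.m v = ∅ :=
  if_pos rfl

theorem prefixInterval_of_pos (hi : 0 < i) : P.prefixInterval i v = P.interval 0 i P.s v :=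
  if_neg hi.ne'

theorem suffixInterval_of_lt (hi : i < P.m) : P.suffixInterval i v = P.interval i P.m v P.t :=
  if_neg hi.ne

theorem ordConnected_prefixInterval (hi : i ≤ P.m) (hv : v ∈ P.node i) :
    (P.prefixInterval i v).OrdConnected := by
  rcases i.eq_zero_or_pos with rfl | hpos
  · exact prefixInterval_zero ▸ Set.ordConnected_empty
  · rw [prefixInterval_of_pos hpos]
    exact P.interval_ordConnected 0 i P.s v hpos hi P.s_mem_node_zero hv

theorem ordConnected_suffixInterval (hi : i ≤ P.m) (hv : v ∈ P.node i) :
    (P.suffixInterval i v).OrdConnected := by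
  rcases hi.eq_or_lt with rfl | hlt
  · exact suffixInterval_last ▸ Set.ordConnected_empty
  · rw [suffixInterval_of_lt hlt]
    exact P.interval_ordConnected i P.m v P.t hlt le_rfl hv P.t_mem_node_last

theorem disjoint_prefixInterval_suffixInterval (hi : i ≤ P.m) (hv : v ∈ P.node i) :
    Disjoint (P.prefixInterval i v) (P.suffixInterval i v) := by
  rcases i.eq_zero_or_pos with rfl | hpos
  · exact prefixInterval_zero ▸ Set.empty_disjoint _
  rcases hi.eq_or_lt with rfl | hlt
  · exact suffixInterval_last ▸ Set.disjoint_empty _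
  rw [prefixInterval_of_pos hpos, suffixInterval_of_lt hlt]
  exact P.interval_disjoint 0 i P.m P.s v P.t hpos hlt le_rfl P.s_mem_node_zero hv
    P.t_mem_node_last

theorem monotoneOn_prefixInterval (hmono : P.IntervalsMonotone) (hπ : P.IsPath 0 P.m π) :
    MonotoneOn (fun i => P.prefixInterval i (π i)) (Set.Iic P.m) := by
  intro i _ j hj hij
  rcases i.eq_zero_or_pos with rfl | hpos
  · exact prefixInterval_zero.trans_subset (Set.empty_subset _)
  · simp only [prefixInterval_of_pos hpos, prefixInterval_of_pos (hpos.trans_le hij),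
      ← hπ.apply_zero]
    exact hmono 0 0 i j π le_rfl hpos hij hj (hπ.mono le_rfl hj)

theorem antitoneOn_suffixInterval (hmono : P.IntervalsMonotone) (hπ : P.IsPath 0 P.m π) :
    AntitoneOn (fun i => P.suffixInterval i (π i)) (Set.Iic P.m) := by
  intro i _ j hj hij
  rcases (Set.mem_Iic.1 hj).eq_or_lt with rfl | hlt
  · exact suffixInterval_last.trans_subset (Set.empty_subset _)
  · simp only [suffixInterval_of_lt hlt, suffixInterval_of_lt (hij.trans_lt hlt),
      ← hπ.apply_last P.m.zero_le]
    exact hmono i j P.m P.m π hij hlt le_rfl le_rfl (hπ.mono i.zero_le le_rfl)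

end PrefixSuffix

/-- `Ascending`, extended to the terminals, for which it always holds. -/
def AscendingOrTerminal (P : StrictIntervalABP F n) (i v : ℕ) : Prop :=
  IntervalLE (P.prefixInterval i v) (P.suffixInterval i v)

/-- `Descending`, extended to the terminals, for which it always holds. -/
def DescendingOrTerminal (P : StrictIntervalABP F n) (i v : ℕ) : Prop :=
  IntervalLE (P.suffixInterval i v) (P.prefixInterval i v)

/-- The edge from `u` in layer `k` to `v` in layer `k + 1` is neutral if `I_{s,u}` and `I_{v,t}`
are empty. The paths through such edges are the ones that are both ascending and descending. -/
def IsNeutralEdge (P : StrictIntervalABP F n) (k u v : ℕ) : Prop :=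
  P.prefixInterval k u = ∅ ∧ P.suffixInterval (k + 1) v = ∅

section Path

variable {P : StrictIntervalABP F n} {i v : ℕ} {π : ℕ → ℕ}

theorem ascendingOrTerminal_iff (hi : 0 < i) (him : i < P.m) :
    P.AscendingOrTerminal i v ↔ P.Ascending i v := by
  rw [AscendingOrTerminal, prefixInterval_of_pos hi, suffixInterval_of_lt him, Ascending]

theorem descendingOrTerminal_iff (hi : 0 < i) (him : i < P.m) :
    P.DescendingOrTerminal i v ↔ P.Descending i v := by
  rw [DescendingOrTerminal, prefixInterval_of_pos hi, suffixInterval_of_lt him, Descending]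

theorem ascendingOrTerminal_or_descendingOrTerminal (hi : i ≤ P.m) (hv : v ∈ P.node i) :
    P.AscendingOrTerminal i v ∨ P.DescendingOrTerminal i v :=
  intervalLE_total_of_disjoint (ordConnected_prefixInterval hi hv)
    (ordConnected_suffixInterval hi hv) (disjoint_prefixInterval_suffixInterval hi hv)

theorem ascendingOrTerminal_and_descendingOrTerminal_iff (hi : i ≤ P.m) (hv : v ∈ P.node i) :
    P.AscendingOrTerminal i v ∧ P.DescendingOrTerminal i v ↔
      P.prefixInterval i v = ∅ ∨ P.suffixInterval i v = ∅ :=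
  intervalLE_and_intervalLE_iff_of_disjoint (disjoint_prefixInterval_suffixInterval hi hv)

theorem forall_ascendingOrTerminal_or_forall_descendingOrTerminal (hmono : P.IntervalsMonotone)
    (hπ : P.IsPath 0 P.m π) :
    (∀ i ≤ P.m, P.AscendingOrTerminal i (π i)) ∨ ∀ i ≤ P.m, P.DescendingOrTerminal i (π i) :=
  forall_intervalLE_or_forall_intervalLE (monotoneOn_prefixInterval hmono hπ)
    (antitoneOn_suffixInterval hmono hπ)
    (fun i hi => disjoint_prefixInterval_suffixInterval hi (hπ.1 i i.zero_le hi))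
    (fun i hi => ascendingOrTerminal_or_descendingOrTerminal hi (hπ.1 i i.zero_le hi))

theorem exists_isNeutralEdge_iff (hmono : P.IntervalsMonotone) (hπ : P.IsPath 0 P.m π) :
    (∃ k < P.m, P.IsNeutralEdge k (π k) (π (k + 1))) ↔
      (∀ i ≤ P.m, P.AscendingOrTerminal i (π i)) ∧ ∀ i ≤ P.m, P.DescendingOrTerminal i (π i) := by
  calc (∃ k < P.m, P.IsNeutralEdge k (π k) (π (k + 1)))
    _ ↔ ∀ i ≤ P.m, P.prefixInterval i (π i) = ∅ ∨ P.suffixInterval i (π i) = ∅ :=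
      exists_eq_empty_and_succ_eq_empty_iff P.m_pos (monotoneOn_prefixInterval hmono hπ)
        (antitoneOn_suffixInterval hmono hπ) prefixInterval_zero suffixInterval_last
    _ ↔ ∀ i ≤ P.m, P.AscendingOrTerminal i (π i) ∧ P.DescendingOrTerminal i (π i) :=
      forall₂_congr fun i hi =>
        (ascendingOrTerminal_and_descendingOrTerminal_iff hi (hπ.1 i i.zero_le hi)).symm
    _ ↔ _ := forall₂_and

end Path

section Parts

variable (P : StrictIntervalABP F n)

theorem ascendingOrTerminal_s : P.AscendingOrTerminal 0 P.s := by
  simp [AscendingOrTerminal, IntervalLE, prefixInterval_zero]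

theorem ascendingOrTerminal_t : P.AscendingOrTerminal P.m P.t := by
  simp [AscendingOrTerminal, IntervalLE, suffixInterval_last]

theorem descendingOrTerminal_s : P.DescendingOrTerminal 0 P.s := by
  simp [DescendingOrTerminal, IntervalLE, prefixInterval_zero]

theorem descendingOrTerminal_t : P.DescendingOrTerminal P.m P.t := by
  simp [DescendingOrTerminal, IntervalLE, suffixInterval_last]

/-- The subprogram of the ascending nodes. -/
noncomputable def ascendingPart : StrictIntervalABP F n :=
  P.ofSubprogram
    (P.restrict P.AscendingOrTerminal (fun _ _ _ => True)
      P.ascendingOrTerminal_s P.ascendingOrTerminal_t)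
    ABP.isSubprogram_restrict

/-- The subprogram of the descending nodes, without the neutral edges. -/
noncomputable def descendingPart : StrictIntervalABP F n :=
  P.ofSubprogram
    (P.restrict P.DescendingOrTerminal (fun k u v => ¬ P.IsNeutralEdge k u v)
      P.descendingOrTerminal_s P.descendingOrTerminal_t)
    ABP.isSubprogram_restrict

theorem isSubprogram_ascendingPart : P.ascendingPart.IsSubprogram P.toABP :=
  P.isSubprogram_ofSubprogram _

theorem isSubprogram_descendingPart : P.descendingPart.IsSubprogram P.toABP :=
  P.isSubprogram_ofSubprogram _

variable {P} {i v : ℕ} {π : ℕ → ℕ}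

theorem ascending_ascendingPart (hi : 0 < i) (him : i < P.m) (hv : v ∈ P.ascendingPart.node i) :
    P.ascendingPart.Ascending i v :=
  (ascendingOrTerminal_iff hi him).1
    (ABP.mem_node_restrict (hs := P.ascendingOrTerminal_s) (ht := P.ascendingOrTerminal_t).1 hv).2

theorem descending_descendingPart (hi : 0 < i) (him : i < P.m)
    (hv : v ∈ P.descendingPart.node i) : P.descendingPart.Descending i v :=
  (descendingOrTerminal_iff hi him).1
    (ABP.mem_node_restrict (hs := P.descendingOrTerminal_s) (ht := P.descendingOrTerminal_t).1 hv).2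

theorem isPath_ascendingPart_iff (hπ : P.IsPath 0 P.m π) :
    P.ascendingPart.IsPath 0 P.m π ↔ ∀ i ≤ P.m, P.AscendingOrTerminal i (π i) := by
  simp [ascendingPart, ofSubprogram, ABP.isPath_restrict_iff, hπ]

theorem isPath_descendingPart_iff (hπ : P.IsPath 0 P.m π) :
    P.descendingPart.IsPath 0 P.m π ↔ (∀ i ≤ P.m, P.DescendingOrTerminal i (π i)) ∧
      ¬ ∃ k < P.m, P.IsNeutralEdge k (π k) (π (k + 1)) := by
  simp [descendingPart, ofSubprogram, ABP.isPath_restrict_iff, hπ]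

theorem isPath_ascendingPart_xor_isPath_descendingPart (hmono : P.IntervalsMonotone)
    (hπ : P.IsPath 0 P.m π) :
    Xor (P.ascendingPart.IsPath 0 P.m π) (P.descendingPart.IsPath 0 P.m π) := by
  rw [isPath_ascendingPart_iff hπ, isPath_descendingPart_iff hπ, exists_isNeutralEdge_iff hmono hπ]
  have := forall_ascendingOrTerminal_or_forall_descendingOrTerminal hmono hπ
  tauto

theorem eval_eq_ascendingPart_add_descendingPart [Field F] (hmono : P.IntervalsMonotone) :
    P.eval = P.ascendingPart.eval + P.descendingPart.eval :=
  ABP.eval_eq_add_of_isPath_xor P.isSubprogram_ascendingPart P.isSubprogram_descendingPart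
    fun _ hπ => isPath_ascendingPart_xor_isPath_descendingPart hmono hπ

end Parts

end StrictIntervalABP

theorem strictInterval_split_asc_desc_general {F : Type*} [Field F] (n : ℕ)
    (P : StrictIntervalABP F n) :
    ∃ P₁ P₂ : StrictIntervalABP F n,
      P₁.toABP.IsSubprogram P.toABP ∧ P₂.toABP.IsSubprogram P.toABP ∧
      P₁.toABP.size ≤ P.toABP.size ∧ P₂.toABP.size ≤ P.toABP.size ∧
      (∀ i v, 0 < i → i < P₁.m → v ∈ P₁.node i → P₁.Ascending i v) ∧
      (∀ i v, 0 < i → i < P₂.m → v ∈ P₂.node i → P₂.Descending i v) ∧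
      P.toABP.eval = P₁.toABP.eval + P₂.toABP.eval ∧
      (P.IntervalsMonotone → P₁.interval = P.interval ∧ P₂.interval = P.interval) := by
  obtain ⟨R, hRP, hmono, hinterval⟩ := P.exists_intervalsMonotone
  rw [← hRP]
  exact ⟨R.ascendingPart, R.descendingPart,
    R.isSubprogram_ascendingPart, R.isSubprogram_descendingPart,
    R.isSubprogram_ascendingPart.size_le, R.isSubprogram_descendingPart.size_le,
    fun _ _ hi him hv => StrictIntervalABP.ascending_ascendingPart hi him hv,
    fun _ _ hi him hv => StrictIntervalABP.descending_descendingPart hi him hv,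
    StrictIntervalABP.eval_eq_ascendingPart_add_descendingPart hmono,
    fun h => ⟨hinterval h, hinterval h⟩⟩

theorem strictInterval_split_asc_desc {F : Type*} [Field F] (n : ℕ)
    (P : StrictIntervalABP F n) :
    ∃ P₁ P₂ : StrictIntervalABP F n,
      P₁.toABP.IsSubprogram P.toABP ∧ P₂.toABP.IsSubprogram P.toABP ∧
      P₁.toABP.size ≤ P.toABP.size ∧ P₂.toABP.size ≤ P.toABP.size ∧
      (∀ i v, 0 < i → i < P₁.m → v ∈ P₁.node i → P₁.Ascending i v) ∧
      (∀ i v, 0 < i → i < P₂.m → v ∈ P₂.node i → P₂.Descending i v) ∧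
      P.toABP.eval = P₁.toABP.eval + P₂.toABP.eval ∧
      (P.IntervalsNonempty → P.IntervalsMonotone →
        P₁.interval = P.interval ∧ P₂.interval = P.interval) := by
  obtain ⟨P₁, P₂, hsub₁, hsub₂, hsize₁, hsize₂, hasc, hdesc, heval, hinterval⟩ :=
    strictInterval_split_asc_desc_general n P
  exact ⟨P₁, P₂, hsub₁, hsub₂, hsize₁, hsize₂, hasc, hdesc, heval, fun _ => hinterval⟩
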